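/- Let G be a finite simple graph on vertex set {v_1,…,v_n} in which every vertex has even degree, and fix an orientation of its edges so that the graph polynomial F_G = ∏_{(i,j)∈E}(x_j − x_i) ∈ ℝ[x_1,…,x_n] is defined. Suppose F_G has a nonzero almost central coefficient, i.e. there is ξ ∈ ℤ_{≥0}^n with [x^ξ]F_G ≠ 0 and |ξ_i − deg_G(v_i)/2| ≤ 1 for all i. Then for every integer k ≥ 2, the graph polynomial F_H of the Cartesian product H = G □ C_{2k} (with any fixed orientation of its edges) has a nonzero central coefficient: the coefficient of ∏_{w ∈ V(H)} x_w^{deg_H(w)/2} in F_H is nonzero. Note that deg_H((v_i,u)) = deg_G(v_i) + 2 is even for every vertex (v_i,u) of H. -/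

import Mathlib

/-!
The central coefficient of `F_H`, `H = G □ C_n`, is the trace of the `n`-th power of a transfer
matrix. For each layer `t` of the cycle let `S_t` be the set of vertices `v` for which the factor
`x_{(v,t+1)} - x_{(v,t)}` contributes `-x_{(v,t)}`. What is left in layer `t` is a copy of `F_G`, of
which the coefficient at `deg/2 + 1_{S_{t-1}} - 1_{S_t}` is needed. Summing over all closed
sequences `(S_t)` gives `tr (A ^ n)`, where `A(S, T) = (-1)^|T| [x^{deg/2 + 1_S - 1_T}] F_G` for
subsets `S`, `T` of `V`.

Choosing the other endpoint of every edge of `G` shows that `Aᵀ = ± A`, and the almost central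
coefficients of `F_G` are, up to sign, the entries of `A`, so `A ≠ 0`. A nonzero real matrix with
`Aᵀ = ± A` is not nilpotent, and `tr (A ^ (2k)) = ± tr ((A ^ k)ᵀ A ^ k)` is, up to sign, the squared
Frobenius norm of `A ^ k ≠ 0`.
-/

open MvPolynomial Finset

/-- An orientation of a simple graph: a finite set of ordered pairs containing,
for each edge `{u, v}` of `G`, exactly one of `(u, v)` and `(v, u)`. -/
structure GraphOrientation {V : Type*} (G : SimpleGraph V) where
  edges : Finset (V × V)
  adj_of_mem : ∀ e ∈ edges, G.Adj e.1 e.2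
  mem_iff_not_swap_mem : ∀ u v : V, G.Adj u v → ((u, v) ∈ edges ↔ (v, u) ∉ edges)

/-- The graph polynomial `∏_{(i,j) ∈ E} (x_j - x_i)` associated to an orientation. -/
noncomputable def graphPoly {V : Type*} {G : SimpleGraph V} (D : GraphOrientation G) :
    MvPolynomial V ℝ :=
  ∏ e ∈ D.edges, (X e.2 - X e.1)

/-- The outdegree of a vertex in an orientation. -/
def GraphOrientation.outDeg {V : Type*} [DecidableEq V] {G : SimpleGraph V}
    (D : GraphOrientation G) (v : V) : ℕ :=
  (D.edges.filter fun e => e.1 = v).card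

/-- `G` is `f`-choosable: any assignment of lists of real colors with `|A_v| ≥ f v`
admits a proper coloring from the lists. -/
def Choosable {V : Type*} (G : SimpleGraph V) (f : V → ℕ) : Prop :=
  ∀ A : V → Finset ℝ, (∀ v, f v ≤ (A v).card) →
    ∃ c : V → ℝ, (∀ v, c v ∈ A v) ∧ ∀ u v : V, G.Adj u v → c u ≠ c v

/-- The list chromatic number. -/
noncomputable def chNumber {V : Type*} (G : SimpleGraph V) : ℕ :=
  sInf {m | Choosable G fun _ => m}

/-- The Alon–Tarsi number: the least `k` such that the graph polynomial has a
monomial `x^d` with nonzero coefficient and `max_v d_v = k - 1`. -/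
noncomputable def ATNumber {V : Type*} (G : SimpleGraph V) : ℕ :=
  sInf {k | ∃ (D : GraphOrientation G) (d : V →₀ ℕ),
    MvPolynomial.coeff d (graphPoly D) ≠ 0 ∧ d.support.sup d + 1 = k}

instance {α β : Type*} {G : SimpleGraph α} {H : SimpleGraph β}
    [DecidableEq α] [DecidableEq β] [DecidableRel G.Adj] [DecidableRel H.Adj] :
    DecidableRel (G.boxProd H).Adj :=
  fun _ _ => decidable_of_iff _ SimpleGraph.boxProd_adj.symm

/-! ### Powers of matrices -/

section Walks

variable {ι R : Type*} [Fintype ι] [DecidableEq ι] [CommSemiring R] (M : Matrix ι ι R)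

theorem sum_mul_prod_walk_eq_sum_mul_pow (n : ℕ) (g : ι → ι → R) :
    ∑ σ : Fin (n + 1) → ι, g (σ 0) (σ (Fin.last n)) * ∏ t : Fin n, M (σ t.castSucc) (σ t.succ) =
      ∑ i, ∑ j, g i j * (M ^ n) i j := by
  induction n generalizing g with
  | zero =>
    rw [← (Equiv.funUnique (Fin 1) ι).symm.sum_comp]
    simp [Matrix.one_apply]
  | succ n ih =>
    rw [← (Fin.consEquiv fun _ : Fin (n + 2) => ι).sum_comp, Fintype.sum_prod_type]
    refine sum_congr rfl fun i _ => ?_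
    have hi := ih fun j l => g i l * M i j
    simp only [mul_assoc] at hi
    simp only [Fin.consEquiv_apply, Fin.prod_univ_succ, Fin.cons_zero, Fin.castSucc_zero,
      Fin.cons_succ, ← Fin.succ_last, ← Fin.succ_castSucc]
    rw [hi, sum_comm]
    simp_rw [pow_succ', Matrix.mul_apply, mul_sum]

theorem sum_prod_closedWalk_eq_trace_pow (n : ℕ) [NeZero n] :
    ∑ σ : Fin n → ι, ∏ t, M (σ t) (σ (t + 1)) = (M ^ n).trace := by
  obtain ⟨m, rfl⟩ := Nat.exists_eq_succ_of_ne_zero (NeZero.ne n)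
  simp_rw [Nat.succ_eq_add_one, Fin.prod_univ_castSucc, Fin.coeSucc_eq_succ, Fin.last_add_one,
    mul_comm (∏ _, _)]
  rw [sum_mul_prod_walk_eq_sum_mul_pow M m fun i j => M j i, sum_comm]
  simp [Matrix.trace, pow_succ', Matrix.mul_apply]

end Walks

section ConjTranspose

open Matrix

variable {ι R : Type*} [Fintype ι] [DecidableEq ι] [CommRing R] [PartialOrder R] [StarRing R]
  [StarOrderedRing R] [NoZeroDivisors R] {M : Matrix ι ι R} {ε : R}

theorem pow_ne_zero_of_conjTranspose_eq_smul (hM : Mᴴ = ε • M) (hM₀ : M ≠ 0) (k : ℕ) :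
    M ^ (k + 1) ≠ 0 := by
  induction k with
  | zero => rwa [zero_add, pow_one]
  | succ k ih =>
    refine fun h => ih ?_
    rw [pow_succ', ← conjTranspose_mul_self_mul_eq_zero, Matrix.mul_assoc, ← pow_succ', hM,
      smul_mul, ← pow_succ', h, smul_zero]

theorem trace_pow_two_mul_ne_zero_of_conjTranspose_eq_smul (hM : Mᴴ = ε • M) (hM₀ : M ≠ 0)
    {k : ℕ} (hk : k ≠ 0) : (M ^ (2 * k)).trace ≠ 0 := by
  obtain ⟨j, rfl⟩ := Nat.exists_eq_succ_of_ne_zero hk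
  intro h
  apply pow_ne_zero_of_conjTranspose_eq_smul hM hM₀ j
  rw [← trace_conjTranspose_mul_self_eq_zero_iff, conjTranspose_pow, hM, smul_pow, smul_mul,
    ← pow_add, ← two_mul, trace_smul, h, smul_zero]

end ConjTranspose

/-! ### Coefficients of products -/

section Coefficients

variable {σ τ ι R : Type*}

theorem sum_mapDomain_mk_apply [Fintype τ] (f : τ → σ →₀ ℕ) (v : σ) (t : τ) :
    (∑ s, (f s).mapDomain fun u => (u, s)) (v, t) = f t v := by
  rw [Finsupp.finsetSum_apply, sum_eq_single t, Finsupp.mapDomain_apply (Prod.mk_left_injective t)]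
  · rintro s - hs
    refine Finsupp.mapDomain_of_notMem_range _ _ ?_
    rintro ⟨u, hu⟩
    exact hs (Prod.mk.inj hu).2
  · exact fun ht => absurd (mem_univ t) ht

theorem coeff_prod_eq_sum_finsuppAntidiag [DecidableEq σ] [DecidableEq ι] [CommSemiring R]
    (P : ι → MvPolynomial σ R) (e : σ →₀ ℕ) (s : Finset ι) :
    coeff e (∏ i ∈ s, P i) = ∑ l ∈ s.finsuppAntidiag e, ∏ i ∈ s, coeff (l i) (P i) := by
  rw [← coeff_coe, ← coeToMvPowerSeries.ringHom_apply, map_prod, MvPowerSeries.coeff_prod]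
  simp only [coeToMvPowerSeries.ringHom_apply, coeff_coe]

theorem coeff_prod_rename_mk [CommSemiring R] [Fintype τ] (P : τ → MvPolynomial σ R)
    (e : σ × τ →₀ ℕ) :
    coeff e (∏ t, rename (fun v => (v, t)) (P t)) =
      ∏ t, coeff (e.comapDomain (fun v => (v, t)) (Prod.mk_left_injective t).injOn) (P t) := by
  classical
  let d (t : τ) : σ →₀ ℕ := e.comapDomain (fun v => (v, t)) (Prod.mk_left_injective t).injOn
  let l : τ →₀ σ × τ →₀ ℕ :=
    Finsupp.equivFunOnFinite.symm fun t => (d t).mapDomain fun v => (v, t)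
  have sum_l : ∑ t, l t = e := by
    ext ⟨v, t⟩
    exact sum_mapDomain_mk_apply d v t
  have l_unique (b : τ →₀ σ × τ →₀ ℕ) (hb : ∑ t, b t = e)
      (hcoeff : ∀ t, coeff (b t) (rename (fun v => (v, t)) (P t)) ≠ 0) : b = l := by
    choose f hf using fun t => coeff_rename_ne_zero _ _ _ (hcoeff t)
    have hfd : f = d := by
      ext t v
      rw [← sum_mapDomain_mk_apply f v t, sum_congr rfl fun t _ => (hf t).1, hb]
      rfl
    ext1 t
    rw [← (hf t).1, hfd]
    rfl
  rw [coeff_prod_eq_sum_finsuppAntidiag, sum_eq_single l]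
  · exact prod_congr rfl fun t _ => coeff_rename_mapDomain _ (Prod.mk_left_injective t) _ _
  · intro b hb hne
    by_contra h
    exact hne (l_unique b (mem_finsuppAntidiag.1 hb).1 fun t ht => h (prod_eq_zero (mem_univ t) ht))
  · exact fun hl => absurd (mem_finsuppAntidiag.2 ⟨sum_l, subset_univ _⟩) hl

theorem coeff_prod_X_sub_X_mul_monomial_eq_of_add_eq [CommRing R] (f g : ι → σ) (E : Finset ι)
    {p q m n : σ →₀ ℕ}
    (h : m + n = ∑ i ∈ E, (Finsupp.single (f i) 1 + Finsupp.single (g i) 1) + (p + q)) :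
    coeff m ((∏ i ∈ E, (X (f i) - X (g i))) * monomial p (1 : R)) =
      (-1) ^ #E * coeff n ((∏ i ∈ E, (X (f i) - X (g i))) * monomial q (1 : R)) := by
  classical
  have X_mul (v : σ) (r : σ →₀ ℕ) :
      (X v * monomial r 1 : MvPolynomial σ R) = monomial (r + Finsupp.single v 1) 1 := by
    rw [X, monomial_mul, one_mul, add_comm]
  induction E using Finset.induction_on generalizing p q with
  | empty =>
    rw [sum_empty, zero_add] at h
    have hiff : p = m ↔ q = n :=
      ⟨fun hp => (add_left_cancel (hp ▸ h)).symm, fun hq => (add_right_cancel (hq ▸ h)).symm⟩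
    simp [coeff_monomial, hiff]
  | insert i E hi ih =>
    rw [sum_insert hi] at h
    have expand (r : σ →₀ ℕ) :
        (∏ j ∈ insert i E, (X (f j) - X (g j))) * monomial r (1 : R) =
          (∏ j ∈ E, (X (f j) - X (g j))) * monomial (r + Finsupp.single (f i) 1) 1 -
            (∏ j ∈ E, (X (f j) - X (g j))) * monomial (r + Finsupp.single (g i) 1) 1 := by
      rw [prod_insert hi, ← X_mul, ← X_mul]
      ring
    rw [expand p, expand q, coeff_sub, coeff_sub, card_insert_of_notMem hi,
      ih (q := q + Finsupp.single (g i) 1) (by rw [h]; abel),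
      ih (q := q + Finsupp.single (f i) 1) (by rw [h]; abel)]
    ring

theorem prod_X_eq_monomial_indicator [CommSemiring R] (S : Finset σ) :
    ∏ v ∈ S, (X v : MvPolynomial σ R) = monomial (Finsupp.indicator S fun _ _ => 1) 1 := by
  rw [Finsupp.indicator_eq_sum_single, monomial_sum_one]
  rfl

end Coefficients

/-! ### The transfer matrix -/

section TransferMatrix

variable {V R : Type*} [Fintype V] [DecidableEq V] [CommRing R]

/-- The transfer matrix of a polynomial `P` at the exponent `c`, with rows and columns indexed by
sets of variables: its entry at `(S, T)` is `(-1)^|T| [x^{c - 1 + 1_S - 1_T}] P`. The coefficient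
is read off at `c` after multiplying `P` by `x^T x^{Sᶜ}`, so that the entry is zero where the
exponent `c - 1 + 1_S - 1_T` is negative. -/
noncomputable def transferMatrix (P : MvPolynomial V R) (c : V →₀ ℕ) :
    Matrix (Finset V) (Finset V) R :=
  Matrix.of fun S T => (-1) ^ #T * coeff c (P * ((∏ v ∈ T, X v) * ∏ v ∈ Sᶜ, X v))

theorem transferMatrix_apply_eq_mul_coeff_mul_monomial (P : MvPolynomial V R) (c : V →₀ ℕ)
    (S T : Finset V) :
    transferMatrix P c S T = (-1) ^ #T * coeff c (P * monomial
      (Finsupp.indicator T (fun _ _ => 1) + Finsupp.indicator Sᶜ fun _ _ => 1) 1) := by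
  rw [transferMatrix, Matrix.of_apply, prod_X_eq_monomial_indicator, prod_X_eq_monomial_indicator,
    monomial_mul, one_mul]

theorem prod_X_sub_X_eq_sum_rename {τ : Type*} (s t : τ) :
    ∏ v : V, (X (v, t) - X (v, s) : MvPolynomial (V × τ) R) =
      ∑ S : Finset V, rename (fun v => (v, s)) (C ((-1) ^ #S) * ∏ v ∈ S, X v) *
        rename (fun v => (v, t)) (∏ v ∈ Sᶜ, X v) := by
  simp_rw [sub_eq_neg_add, Fintype.prod_add, prod_neg]
  simp [map_prod]

theorem coeff_prod_rename_mul_prod_X_sub_X (P : MvPolynomial V R) (c : V →₀ ℕ) (n : ℕ) [NeZero n] :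
    coeff (Finsupp.equivFunOnFinite.symm fun w : V × Fin n => c w.1)
        ((∏ t : Fin n, rename (fun v => (v, t)) P) *
          ∏ t : Fin n, ∏ v : V, (X (v, t + 1) - X (v, t))) =
      (transferMatrix P c ^ n).trace := by
  have regroup (σ : Fin n → Finset V) :
      (∏ t : Fin n, rename (fun v => (v, t)) P) *
        ∏ t : Fin n, (rename (fun v => (v, t)) (C ((-1) ^ #(σ t)) * ∏ v ∈ σ t, X v) *
          rename (fun v => (v, t + 1)) (∏ v ∈ (σ t)ᶜ, X v)) =
      ∏ t : Fin n, rename (fun v => (v, t))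
        (C ((-1) ^ #(σ t)) * (P * ((∏ v ∈ σ t, X v) * ∏ v ∈ (σ (t - 1))ᶜ, X v))) := by
    have shift := Equiv.prod_comp (Equiv.addRight (1 : Fin n)) fun t =>
      rename (fun v => (v, t)) (∏ v ∈ (σ (t - 1))ᶜ, (X v : MvPolynomial V R))
    simp only [Equiv.coe_addRight, add_sub_cancel_right] at shift
    rw [prod_mul_distrib, shift, ← prod_mul_distrib, ← prod_mul_distrib]
    refine prod_congr rfl fun t _ => ?_
    simp only [map_mul]
    ring
  have restrict (t : Fin n) : Finsupp.comapDomain (fun v => (v, t))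
      (Finsupp.equivFunOnFinite.symm fun w : V × Fin n => c w.1)
      (Prod.mk_left_injective t).injOn = c := by
    ext v
    rfl
  simp_rw [prod_X_sub_X_eq_sum_rename]
  rw [prod_univ_sum, Fintype.piFinset_univ, mul_sum, coeff_sum,
    ← sum_prod_closedWalk_eq_trace_pow]
  refine sum_congr rfl fun σ _ => ?_
  rw [regroup, coeff_prod_rename_mk, ← Equiv.prod_comp (Equiv.addRight (1 : Fin n))]
  simp only [restrict, Equiv.coe_addRight, add_sub_cancel_right, coeff_C_mul, transferMatrix,
    Matrix.of_apply]

theorem transferMatrix_ne_zero {P : MvPolynomial V R} {c ξ : V →₀ ℕ} (hξ : coeff ξ P ≠ 0)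
    (hξc : ∀ v, ξ v ≤ c v ∧ c v ≤ ξ v + 2) : transferMatrix P c ≠ 0 := by
  let S : Finset V := {v | ξ v = c v}
  let T : Finset V := {v | ξ v + 2 = c v}
  have hc : c = ξ + (Finsupp.indicator T (fun _ _ => 1) + Finsupp.indicator Sᶜ fun _ _ => 1) := by
    ext v
    have := hξc v
    simp only [S, T, Finsupp.add_apply, Finsupp.indicator_apply, mem_compl, mem_filter_univ]
    split_ifs <;> omega
  have hentry : transferMatrix P c S T = (-1) ^ #T * coeff ξ P := by
    rw [transferMatrix_apply_eq_mul_coeff_mul_monomial]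
    nth_rw 1 [hc]
    rw [coeff_mul_monomial, mul_one]
  intro h
  rw [h, Matrix.zero_apply] at hentry
  exact hξ (by simpa using hentry.symm)

theorem card_eq_of_transferMatrix_ne_zero {P : MvPolynomial V R} {c : V →₀ ℕ} {d : ℕ}
    (hP : P.IsHomogeneous d) {S T : Finset V} (hST : transferMatrix P c S T ≠ 0)
    (hTS : transferMatrix P c T S ≠ 0) : #S = #T := by
  have degree_eq {A B : Finset V} (h : transferMatrix P c A B ≠ 0) :
      c.degree = d + (#B + #Aᶜ) := by
    have card_X (U : Finset V) : (∏ v ∈ U, (X v : MvPolynomial V R)).IsHomogeneous #U := by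
      simpa using IsHomogeneous.prod U (fun v => X v) (fun _ => 1) fun v _ => isHomogeneous_X R v
    by_contra hne
    exact h (by rw [transferMatrix, Matrix.of_apply,
      (hP.mul ((card_X B).mul (card_X Aᶜ))).coeff_eq_zero hne, mul_zero])
  have h₁ := degree_eq hST
  have h₂ := degree_eq hTS
  have := card_add_card_compl S
  have := card_add_card_compl T
  omega

end TransferMatrix

/-! ### Orientations -/

namespace GraphOrientation

variable {V W : Type*} {G : SimpleGraph V} {H : SimpleGraph W}

theorem mem_edges_iff_adj_and_swap_notMem (D : GraphOrientation G) {u v : V} :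
    (u, v) ∈ D.edges ↔ G.Adj u v ∧ (v, u) ∉ D.edges :=
  ⟨fun h => ⟨D.adj_of_mem _ h, (D.mem_iff_not_swap_mem u v (D.adj_of_mem _ h)).1 h⟩,
    fun h => (D.mem_iff_not_swap_mem u v h.1).2 h.2⟩

theorem image_swap_sdiff_edges [DecidableEq V] (D₁ D₂ : GraphOrientation G) :
    (D₁.edges \ D₂.edges).image Prod.swap = D₂.edges \ D₁.edges := by
  ext ⟨u, v⟩
  have h₁ := D₁.mem_edges_iff_adj_and_swap_notMem (u := u) (v := v)
  have h₂ := D₂.mem_edges_iff_adj_and_swap_notMem (u := u) (v := v)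
  have h₃ := D₁.mem_edges_iff_adj_and_swap_notMem (u := v) (v := u)
  have h₄ := G.adj_comm u v
  simp only [mem_image, mem_sdiff, Prod.exists, Prod.swap_prod_mk, Prod.mk.injEq]
  grind

theorem graphPoly_eq_neg_one_pow_smul [DecidableEq V] (D₁ D₂ : GraphOrientation G) :
    graphPoly D₁ = (-1 : ℝ) ^ #(D₁.edges \ D₂.edges) • graphPoly D₂ := by
  have hswap : ∏ e ∈ D₁.edges \ D₂.edges, (X e.2 - X e.1 : MvPolynomial V ℝ) =
      (-1) ^ #(D₁.edges \ D₂.edges) * ∏ e ∈ D₂.edges \ D₁.edges, (X e.2 - X e.1) := by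
    rw [← D₁.image_swap_sdiff_edges D₂, prod_image Prod.swap_injective.injOn, ← prod_neg]
    simp only [Prod.fst_swap, Prod.snd_swap, neg_sub]
  rw [graphPoly, graphPoly, ← prod_sdiff (inter_subset_left (s₁ := D₁.edges) (s₂ := D₂.edges)),
    ← prod_sdiff (inter_subset_right (s₁ := D₁.edges) (s₂ := D₂.edges)),
    sdiff_inter_self_left, sdiff_inter_self_right, hswap, smul_eq_C_mul, C_pow, C_neg, C_1,
    mul_assoc]

theorem isHomogeneous_graphPoly (D : GraphOrientation G) :
    (graphPoly D).IsHomogeneous #D.edges := by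
  rw [card_eq_sum_ones]
  exact IsHomogeneous.prod D.edges _ _ fun e _ =>
    (isHomogeneous_X ℝ e.2).sub (isHomogeneous_X ℝ e.1)

/-- The indegree of a vertex in an orientation, the counterpart of `GraphOrientation.outDeg`. -/
def inDeg [DecidableEq V] (D : GraphOrientation G) (v : V) : ℕ :=
  #{e ∈ D.edges | e.2 = v}

theorem outDeg_add_inDeg [Fintype V] [DecidableEq V] [DecidableRel G.Adj]
    (D : GraphOrientation G) (v : V) : D.outDeg v + D.inDeg v = G.degree v := by
  have hout : {e ∈ D.edges | e.1 = v} =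
      {w ∈ G.neighborFinset v | (v, w) ∈ D.edges}.image fun w => (v, w) := by
    ext ⟨a, b⟩
    have := D.mem_edges_iff_adj_and_swap_notMem (u := a) (v := b)
    simp only [mem_filter, mem_image, SimpleGraph.mem_neighborFinset]
    grind
  have hin : {e ∈ D.edges | e.2 = v} =
      {w ∈ G.neighborFinset v | (v, w) ∉ D.edges}.image fun w => (w, v) := by
    ext ⟨a, b⟩
    have := D.mem_edges_iff_adj_and_swap_notMem (u := a) (v := b)
    simp only [mem_filter, mem_image, SimpleGraph.mem_neighborFinset, G.adj_comm v]
    grind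
  rw [outDeg, inDeg, hout, hin, card_image_of_injective _ (Prod.mk_right_injective v),
    card_image_of_injective _ (Prod.mk_left_injective v), card_filter_add_card_filter_not,
    G.card_neighborFinset_eq_degree]

theorem sum_single_add_single_apply [Fintype V] [DecidableRel G.Adj]
    (D : GraphOrientation G) (v : V) :
    (∑ e ∈ D.edges, (Finsupp.single e.2 1 + Finsupp.single e.1 1) : V →₀ ℕ) v = G.degree v := by
  classical
  rw [← D.outDeg_add_inDeg, outDeg, inDeg, card_filter, card_filter, ← sum_add_distrib]
  simp only [Finsupp.finsetSum_apply, Finsupp.add_apply, Finsupp.single_apply, add_comm]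

theorem transferMatrix_graphPoly_transpose [Fintype V] [DecidableEq V] [DecidableRel G.Adj]
    (D : GraphOrientation G) {c : V →₀ ℕ} (hc : ∀ v, 2 * c v = G.degree v + 2) :
    (transferMatrix (graphPoly D) c).transpose =
      (-1 : ℝ) ^ #D.edges • transferMatrix (graphPoly D) c := by
  ext S T
  have hcc : c + c = ∑ e ∈ D.edges, (Finsupp.single e.2 1 + Finsupp.single e.1 1) +
      ((Finsupp.indicator S (fun _ _ => 1) + Finsupp.indicator Tᶜ fun _ _ => 1) +
        (Finsupp.indicator T (fun _ _ => 1) + Finsupp.indicator Sᶜ fun _ _ => 1)) := by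
    ext v
    rw [Finsupp.add_apply, ← two_mul, hc, Finsupp.add_apply, D.sum_single_add_single_apply]
    simp only [Finsupp.add_apply, Finsupp.indicator_apply, mem_compl]
    split_ifs <;> rfl
  have hTS : transferMatrix (graphPoly D) c T S * (-1) ^ #T =
      (-1) ^ #D.edges * (transferMatrix (graphPoly D) c S T * (-1) ^ #S) := by
    have := coeff_prod_X_sub_X_mul_monomial_eq_of_add_eq (R := ℝ) Prod.snd Prod.fst D.edges hcc
    simp only [transferMatrix_apply_eq_mul_coeff_mul_monomial, graphPoly]
    linear_combination (-1 : ℝ) ^ (#S + #T) * this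
  rw [Matrix.transpose_apply, Matrix.smul_apply, smul_eq_mul]
  -- The signs `(-1)^|S|` and `(-1)^|T|` agree wherever the entries are nonzero, by homogeneity.
  by_cases hST : transferMatrix (graphPoly D) c S T = 0
  · simpa [hST] using hTS
  · have hcard := card_eq_of_transferMatrix_ne_zero D.isHomogeneous_graphPoly hST fun h => by
      simp [h, hST] at hTS
    rw [hcard, ← mul_assoc] at hTS
    exact mul_right_cancel₀ (by simp) hTS

section BoxProd

variable [Fintype V] [Fintype W] [DecidableEq V] [DecidableEq W]

/-- The orientation of `G □ H` which agrees with `D` on every copy of `G` and with `E` on every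
copy of `H`. -/
def boxProd (D : GraphOrientation G) (E : GraphOrientation H) : GraphOrientation (G.boxProd H) where
  edges := (D.edges ×ˢ (univ : Finset W)).image (fun p => ((p.1.1, p.2), (p.1.2, p.2))) ∪
    ((univ : Finset V) ×ˢ E.edges).image (fun p => ((p.1, p.2.1), (p.1, p.2.2)))
  adj_of_mem := by
    simp only [mem_union, mem_image, mem_product, mem_univ, and_true, true_and]
    rintro _ (⟨p, hp, rfl⟩ | ⟨p, hp, rfl⟩)
    · exact SimpleGraph.boxProd_adj.2 (.inl ⟨D.adj_of_mem _ hp, rfl⟩)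
    · exact SimpleGraph.boxProd_adj.2 (.inr ⟨E.adj_of_mem _ hp, rfl⟩)
  mem_iff_not_swap_mem := by
    have mem_iff (u v : V) (s t : W) :
        ((u, s), (v, t)) ∈
          (D.edges ×ˢ (univ : Finset W)).image (fun p => ((p.1.1, p.2), (p.1.2, p.2))) ∪
            ((univ : Finset V) ×ˢ E.edges).image (fun p => ((p.1, p.2.1), (p.1, p.2.2))) ↔
        (u, v) ∈ D.edges ∧ s = t ∨ u = v ∧ (s, t) ∈ E.edges := by
      simp only [mem_union, mem_image, mem_product, mem_univ, and_true, true_and, Prod.exists,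
        Prod.mk.injEq]
      grind
    rintro ⟨u, s⟩ ⟨v, t⟩ h
    rw [mem_iff, mem_iff]
    rcases SimpleGraph.boxProd_adj.1 h with ⟨hG, rfl : s = t⟩ | ⟨hH, rfl : u = v⟩
    · simpa [hG.ne, hG.ne'] using D.mem_iff_not_swap_mem u v hG
    · simpa [hH.ne, hH.ne'] using E.mem_iff_not_swap_mem s t hH

theorem graphPoly_boxProd (D : GraphOrientation G) (E : GraphOrientation H) :
    graphPoly (D.boxProd E) = (∏ w, rename (fun v => (v, w)) (graphPoly D)) *
      ∏ v, rename (Prod.mk v) (graphPoly E) := by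
  rw [graphPoly, boxProd, prod_union, prod_image, prod_image, prod_product_right, prod_product]
  · simp only [graphPoly, map_prod, map_sub, rename_X]
  · grind [Set.InjOn]
  · grind [Set.InjOn]
  · rw [disjoint_left]
    rintro _ h h'
    obtain ⟨p, hp, rfl⟩ := mem_image.1 h
    obtain ⟨q, -, hq⟩ := mem_image.1 h'
    have := (D.adj_of_mem _ (mem_product.1 hp).1).ne
    grind

end BoxProd

/-- The orientation of the cycle on `Fin n` along which every arc goes from `t` to `t + 1`. -/
def cycle {n : ℕ} [NeZero n] (hn : 3 ≤ n) : GraphOrientation (SimpleGraph.cycleGraph n) where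
  edges := univ.image fun t => (t, t + 1)
  adj_of_mem := by
    simp only [mem_image, mem_univ, true_and, SimpleGraph.cycleGraph_adj']
    rintro _ ⟨t, rfl⟩
    right
    rw [add_sub_cancel_left, Fin.val_one', Nat.mod_eq_of_lt (by omega)]
  mem_iff_not_swap_mem := by
    intro s t h
    have val_one : (1 : Fin n).val = 1 := by rw [Fin.val_one', Nat.mod_eq_of_lt (by omega)]
    have val_sub_eq_one (a b : Fin n) : (a - b).val = 1 ↔ a = b + 1 := by
      rw [← val_one, Fin.val_inj, sub_eq_iff_eq_add']
    have add_one_add_one_ne (a : Fin n) : a + 1 + 1 ≠ a := by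
      rw [add_assoc, Ne, add_eq_left, Fin.ext_iff, Fin.val_add, val_one,
        Nat.mod_eq_of_lt (by omega), Fin.val_zero]
      decide
    rw [SimpleGraph.cycleGraph_adj', val_sub_eq_one, val_sub_eq_one] at h
    simp only [mem_image, mem_univ, true_and, Prod.mk.injEq, exists_eq_left]
    grind

theorem graphPoly_cycle {n : ℕ} [NeZero n] (hn : 3 ≤ n) :
    graphPoly (cycle hn) = ∏ t, (X (t + 1) - X t) := by
  rw [graphPoly, cycle, prod_image fun s _ t _ h => (Prod.mk.inj h).1]

theorem coeff_graphPoly_boxProd_cycle [Fintype V] [DecidableEq V] (D : GraphOrientation G)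
    (c : V →₀ ℕ) {n : ℕ} [NeZero n] (hn : 3 ≤ n) :
    coeff (Finsupp.equivFunOnFinite.symm fun w : V × Fin n => c w.1)
      (graphPoly (D.boxProd (cycle hn))) = (transferMatrix (graphPoly D) c ^ n).trace := by
  rw [← coeff_prod_rename_mul_prod_X_sub_X, graphPoly_boxProd, graphPoly_cycle,
    prod_comm (s := (univ : Finset (Fin n)))]
  simp only [map_prod, map_sub, rename_X]

end GraphOrientation

/-- If all degrees of `G` are even and the graph polynomial of `G`
(w.r.t. some fixed orientation) has a nonzero almost central coefficient, then for
every `k ≥ 2` the graph polynomial of `G □ C_{2k}` (w.r.t. any fixed orientation)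
has a nonzero central coefficient, i.e. the coefficient of
`∏_{(v,u)} x_{(v,u)}^{deg_G(v)/2 + 1}` is nonzero (note
`deg_{G □ C_{2k}}((v,u)) = deg_G(v) + 2`). -/
theorem stmt0 {V : Type*} [Fintype V] [DecidableEq V] (G : SimpleGraph V)
    [DecidableRel G.Adj]
    (hEven : ∀ v, Even (G.degree v))
    (D : GraphOrientation G) (ξ : V →₀ ℕ)
    (hne : MvPolynomial.coeff ξ (graphPoly D) ≠ 0)
    (hac : ∀ v, |2 * (ξ v : ℤ) - (G.degree v : ℤ)| ≤ 2)
    (k : ℕ) (hk : 2 ≤ k)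
    (D' : GraphOrientation (G.boxProd (SimpleGraph.cycleGraph (2 * k)))) :
    MvPolynomial.coeff
      (Finsupp.equivFunOnFinite.symm fun w : V × Fin (2 * k) => G.degree w.1 / 2 + 1)
      (graphPoly D') ≠ 0 := by
  have : NeZero (2 * k) := ⟨by omega⟩
  let c : V →₀ ℕ := Finsupp.equivFunOnFinite.symm fun v => G.degree v / 2 + 1
  have hc (v : V) : 2 * c v = G.degree v + 2 := by
    have := Nat.two_mul_div_two_of_even (hEven v)
    simp only [c, Finsupp.equivFunOnFinite_symm_apply_apply]
    omega
  have hξ (v : V) : ξ v ≤ c v ∧ c v ≤ ξ v + 2 := by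
    have := abs_le.1 (hac v)
    have := hc v
    omega
  let E := D.boxProd (GraphOrientation.cycle (n := 2 * k) (by omega))
  have htrace : (transferMatrix (graphPoly D) c ^ (2 * k)).trace ≠ 0 :=
    trace_pow_two_mul_ne_zero_of_conjTranspose_eq_smul
      ((Matrix.conjTranspose_eq_transpose_of_trivial _).trans
        (D.transferMatrix_graphPoly_transpose hc))
      (transferMatrix_ne_zero hne hξ) (by omega)
  rw [D'.graphPoly_eq_neg_one_pow_smul E, coeff_smul, smul_eq_mul]
  refine mul_ne_zero (by simp) ?_
  rwa [← D.coeff_graphPoly_boxProd_cycle c (n := 2 * k) (by omega)] at htrace
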